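/- Let κ, c : ℝ → ℝ be smooth, let y₁, y₂ : ℝ → ℝ be linearly independent smooth solutions of y'' + κ·y = 0, let u_p be a smooth solution of u'' + κ·u = c, and let c₁, c₂ : J → ℝ be smooth on an open interval J with (c₁'(s), c₂'(s)) ≠ (0,0) for all s ∈ J. Define f(x;s) := u_p(x) + c₁(s)·y₁(x) + c₂(s)·y₂(x). Fix (x₀, s₀) with c₁'(s₀)·y₁(x₀) + c₂'(s₀)·y₂(x₀) ≠ 0. Then there exist an open set D ⊆ ℝ × ℝ containing (x₀, f(x₀;s₀)), an open interval J₀ ∋ s₀, an open interval I₀ ∋ x₀, and a twice continuously differentiable function φ : D → ℝ such that for every s ∈ J₀ the function x ↦ f(x;s) solves u' = φ(x,u) on I₀, and the curvature of φ satisfies 𝒦(x,u) = κ(x) for all (x,u) ∈ D. -/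

import Mathlib

/-- Partial derivative of `φ` with respect to the second (dependent) variable `u`. -/
noncomputable def pderivU (φ : ℝ × ℝ → ℝ) (x u : ℝ) : ℝ :=
  deriv (fun v => φ (x, v)) u

/-- Partial derivative of `φ` with respect to the first (independent) variable `x`. -/
noncomputable def pderivX (φ : ℝ × ℝ → ℝ) (x u : ℝ) : ℝ :=
  deriv (fun t => φ (t, u)) x

/-- Mixed second partial derivative `∂ₓ∂ᵤφ`. -/
noncomputable def pderivXU (φ : ℝ × ℝ → ℝ) (x u : ℝ) : ℝ :=
  deriv (fun t => pderivU φ t u) x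

/-- Second partial derivative `∂ᵤ∂ᵤφ`. -/
noncomputable def pderivUU (φ : ℝ × ℝ → ℝ) (x u : ℝ) : ℝ :=
  deriv (fun v => pderivU φ x v) u

/-- The curvature `𝒦(x,u) := −(∂ₓ∂ᵤφ(x,u) + (∂ᵤφ(x,u))² + φ(x,u)·∂ᵤ∂ᵤφ(x,u))`
of the ODE `u' = φ(x,u)`. -/
noncomputable def curvature (φ : ℝ × ℝ → ℝ) (x u : ℝ) : ℝ :=
  -(pderivXU φ x u + (pderivU φ x u) ^ 2 + φ (x, u) * pderivUU φ x u)

/-!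
Let `F` be a one-parameter family of curves with `∂ₛF ≠ 0`. The inverse function theorem inverts
`(x, s) ↦ (x, F (x, s))` locally, and `φ` is the slope `∂ₓF` in the new coordinates, so that
`φ (x, F (x, s)) = ∂ₓF (x, s)`. Differentiating this identity in `s` shows that the variational
field `v = ∂ₛF` satisfies the linearised equation `v' = ∂ᵤφ v`, while `∂ᵤφ` satisfies along each
solution the Riccati equation `w' = -𝒦 - w²`. Hence `v'' = -𝒦 v`, and since `v` does not vanish the
curvature can be read off from it: for `v = c₁' y₁ + c₂' y₂` we have `v'' = -κ v`.
-/

open Filter Function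
open scoped Topology

section PartialDerivatives

variable {F : ℝ × ℝ → ℝ} {m n : WithTop ℕ∞} {x u : ℝ} {p : ℝ × ℝ}

theorem hasDerivAt_fderiv_fst (hF : DifferentiableAt ℝ F (x, u)) :
    HasDerivAt (fun t => F (t, u)) (fderiv ℝ F (x, u) (1, 0)) x :=
  hF.hasFDerivAt.comp_hasDerivAt x ((hasDerivAt_id x).prodMk (hasDerivAt_const x u))

theorem hasDerivAt_fderiv_snd (hF : DifferentiableAt ℝ F (x, u)) :
    HasDerivAt (fun v => F (x, v)) (fderiv ℝ F (x, u) (0, 1)) u :=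
  hF.hasFDerivAt.comp_hasDerivAt u ((hasDerivAt_const u x).prodMk (hasDerivAt_id u))

theorem pderivX_eq_fderiv (hF : DifferentiableAt ℝ F (x, u)) :
    pderivX F x u = fderiv ℝ F (x, u) (1, 0) :=
  (hasDerivAt_fderiv_fst hF).deriv

theorem pderivU_eq_fderiv (hF : DifferentiableAt ℝ F (x, u)) :
    pderivU F x u = fderiv ℝ F (x, u) (0, 1) :=
  (hasDerivAt_fderiv_snd hF).deriv

theorem hasDerivAt_pderivX (hF : DifferentiableAt ℝ F (x, u)) :
    HasDerivAt (fun t => F (t, u)) (pderivX F x u) x :=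
  (hasDerivAt_fderiv_fst hF).differentiableAt.hasDerivAt

theorem hasDerivAt_pderivU (hF : DifferentiableAt ℝ F (x, u)) :
    HasDerivAt (fun v => F (x, v)) (pderivU F x u) u :=
  (hasDerivAt_fderiv_snd hF).differentiableAt.hasDerivAt

theorem eventually_differentiableAt (hF : ContDiffAt ℝ n F p) (hn : 1 ≤ n) :
    ∀ᶠ q in 𝓝 p, DifferentiableAt ℝ F q :=
  ((hF.of_le hn).eventually (by simp)).mono fun _ hq => hq.differentiableAt one_ne_zero

theorem uncurry_pderivX_eventuallyEq (hF : ContDiffAt ℝ n F p) (hn : 1 ≤ n) :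
    uncurry (pderivX F) =ᶠ[𝓝 p] fun q => fderiv ℝ F q (1, 0) :=
  (eventually_differentiableAt hF hn).mono fun _ => pderivX_eq_fderiv

theorem uncurry_pderivU_eventuallyEq (hF : ContDiffAt ℝ n F p) (hn : 1 ≤ n) :
    uncurry (pderivU F) =ᶠ[𝓝 p] fun q => fderiv ℝ F q (0, 1) :=
  (eventually_differentiableAt hF hn).mono fun _ => pderivU_eq_fderiv

theorem contDiffAt_uncurry_pderivX (hF : ContDiffAt ℝ n F p) (hmn : m + 1 ≤ n) :
    ContDiffAt ℝ m (uncurry (pderivX F)) p :=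
  ((hF.fderiv_right hmn).clm_apply contDiffAt_const).congr_of_eventuallyEq
    (uncurry_pderivX_eventuallyEq hF (le_add_self.trans hmn))

theorem contDiffAt_uncurry_pderivU (hF : ContDiffAt ℝ n F p) (hmn : m + 1 ≤ n) :
    ContDiffAt ℝ m (uncurry (pderivU F)) p :=
  ((hF.fderiv_right hmn).clm_apply contDiffAt_const).congr_of_eventuallyEq
    (uncurry_pderivU_eventuallyEq hF (le_add_self.trans hmn))

theorem differentiableAt_uncurry_pderivX (hF : ContDiffAt ℝ 2 F p) :
    DifferentiableAt ℝ (uncurry (pderivX F)) p :=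
  (contDiffAt_uncurry_pderivX hF one_add_one_eq_two.le).differentiableAt one_ne_zero

theorem differentiableAt_uncurry_pderivU (hF : ContDiffAt ℝ 2 F p) :
    DifferentiableAt ℝ (uncurry (pderivU F)) p :=
  (contDiffAt_uncurry_pderivU hF one_add_one_eq_two.le).differentiableAt one_ne_zero

theorem pderivU_pderivX_eq_pderivXU (hF : ContDiffAt ℝ 2 F (x, u)) :
    pderivU (uncurry (pderivX F)) x u = pderivXU F x u := by
  have hF' : DifferentiableAt ℝ (fderiv ℝ F) (x, u) :=
    (hF.fderiv_right one_add_one_eq_two.le).differentiableAt one_ne_zero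
  calc
    pderivU (uncurry (pderivX F)) x u = fderiv ℝ (uncurry (pderivX F)) (x, u) (0, 1) :=
      pderivU_eq_fderiv (differentiableAt_uncurry_pderivX hF)
    _ = fderiv ℝ (fderiv ℝ F) (x, u) (0, 1) (1, 0) := by
      rw [(uncurry_pderivX_eventuallyEq hF one_le_two).fderiv_eq,
        fderiv_clm_apply hF' (differentiableAt_const _)]
      simp
    _ = fderiv ℝ (fderiv ℝ F) (x, u) (1, 0) (0, 1) :=
      hF.isSymmSndFDerivAt (by simp) _ _
    _ = fderiv ℝ (uncurry (pderivU F)) (x, u) (1, 0) := by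
      rw [(uncurry_pderivU_eventuallyEq hF one_le_two).fderiv_eq,
        fderiv_clm_apply hF' (differentiableAt_const _)]
      simp
    _ = pderivXU F x u :=
      (pderivX_eq_fderiv (differentiableAt_uncurry_pderivU hF)).symm

theorem hasDerivAt_comp_graph {f : ℝ → ℝ} {f' : ℝ} (hF : DifferentiableAt ℝ F (x, f x))
    (hf : HasDerivAt f f' x) :
    HasDerivAt (fun t => F (t, f t)) (pderivX F x (f x) + f' * pderivU F x (f x)) x := by
  refine (hF.hasFDerivAt.comp_hasDerivAt x ((hasDerivAt_id x).prodMk hf)).congr_deriv ?_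
  have hsplit : ((1, f') : ℝ × ℝ) = (1, 0) + f' • (0, 1) := by simp
  rw [hsplit, map_add, map_smul, pderivX_eq_fderiv hF, pderivU_eq_fderiv hF, smul_eq_mul]

end PartialDerivatives

section Curvature

variable {φ F : ℝ × ℝ → ℝ} {f v : ℝ → ℝ} {x s : ℝ}

theorem hasDerivAt_pderivU_along_solution (hφ : ContDiffAt ℝ 2 φ (x, f x))
    (hf : HasDerivAt f (φ (x, f x)) x) :
    HasDerivAt (fun t => pderivU φ t (f t)) (-curvature φ x (f x) - pderivU φ x (f x) ^ 2) x := by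
  refine (hasDerivAt_comp_graph (differentiableAt_uncurry_pderivU hφ) hf).congr_deriv ?_
  change pderivXU φ x (f x) + φ (x, f x) * pderivUU φ x (f x) = _
  rw [curvature]
  ring

theorem deriv_deriv_eq_neg_curvature_mul (hφ : ContDiffAt ℝ 2 φ (x, f x))
    (hf : HasDerivAt f (φ (x, f x)) x)
    (hv : ∀ᶠ t in 𝓝 x, HasDerivAt v (pderivU φ t (f t) * v t) t) :
    deriv (deriv v) x = -curvature φ x (f x) * v x := by
  have hv' : deriv v =ᶠ[𝓝 x] fun t => pderivU φ t (f t) * v t := hv.mono fun _ ht => ht.deriv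
  rw [hv'.deriv_eq, ((hasDerivAt_pderivU_along_solution hφ hf).fun_mul hv.self_of_nhds).deriv]
  ring

/-- The curves `x ↦ F (x, s)` solve `u' = φ(x, u)` near the point `p` of the `(x, s)`-plane. -/
def IsSolutionFamilyAt (φ F : ℝ × ℝ → ℝ) (p : ℝ × ℝ) : Prop :=
  ∀ᶠ q in 𝓝 p, HasDerivAt (fun t => F (t, q.2)) (φ (q.1, F q)) q.1

theorem IsSolutionFamilyAt.eventually {p : ℝ × ℝ} (h : IsSolutionFamilyAt φ F p) :
    ∀ᶠ q in 𝓝 p, IsSolutionFamilyAt φ F q :=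
  eventually_eventually_nhds.2 h

theorem IsSolutionFamilyAt.linearized_equation (h : IsSolutionFamilyAt φ F (x, s))
    (hφ : DifferentiableAt ℝ φ (x, F (x, s))) (hF : ContDiffAt ℝ 2 F (x, s)) :
    HasDerivAt (fun t => pderivU F t s) (pderivU φ x (F (x, s)) * pderivU F x s) x := by
  have hslope : (fun r => pderivX F x r) =ᶠ[𝓝 s] fun r => φ (x, F (x, r)) :=
    ((Continuous.prodMk_right x).tendsto s).eventually (h.mono fun _ hq => hq.deriv)
  have hφF : HasDerivAt (fun r => φ (x, F (x, r))) (pderivU φ x (F (x, s)) * pderivU F x s) s :=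
    (hasDerivAt_pderivU hφ).comp (h₂ := fun u => φ (x, u)) s
      (hasDerivAt_pderivU (hF.differentiableAt two_ne_zero))
  refine (hasDerivAt_pderivX (differentiableAt_uncurry_pderivU hF)).congr_deriv ?_
  calc
    pderivXU F x s = pderivU (uncurry (pderivX F)) x s := (pderivU_pderivX_eq_pderivXU hF).symm
    _ = pderivU φ x (F (x, s)) * pderivU F x s := (hφF.congr_of_eventuallyEq hslope).deriv

theorem IsSolutionFamilyAt.jacobi_equation (h : IsSolutionFamilyAt φ F (x, s))
    (hφ : ContDiffAt ℝ 2 φ (x, F (x, s))) (hF : ContDiffAt ℝ 2 F (x, s)) :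
    deriv (deriv fun t => pderivU F t s) x = -curvature φ x (F (x, s)) * pderivU F x s := by
  refine deriv_deriv_eq_neg_curvature_mul (f := fun t => F (t, s)) hφ h.self_of_nhds ?_
  have hφF : ∀ᶠ q in 𝓝 (x, s), ContDiffAt ℝ 2 φ (q.1, F q) :=
    (continuousAt_fst.prodMk hF.continuousAt).eventually (hφ.eventually (by simp))
  have hvar : ∀ᶠ q in 𝓝 (x, s),
      HasDerivAt (fun t => pderivU F t q.2) (pderivU φ q.1 (F q) * pderivU F q.1 q.2) q.1 := by
    filter_upwards [h.eventually, hφF, hF.eventually (by simp)] with q hq hφq hFq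
    exact hq.linearized_equation (hφq.differentiableAt two_ne_zero) hFq
  exact ((Continuous.prodMk_left s).tendsto x).eventually hvar

end Curvature

section Existence

theorem exists_continuousLinearEquiv_eq_fst_prod {𝕜 E : Type*} [NontriviallyNormedField 𝕜]
    [NormedAddCommGroup E] [NormedSpace 𝕜 E] (L : E × 𝕜 →L[𝕜] 𝕜) (hL : L (0, 1) ≠ 0) :
    ∃ A : (E × 𝕜) ≃L[𝕜] (E × 𝕜), (A : E × 𝕜 →L[𝕜] E × 𝕜) =
      (ContinuousLinearMap.fst 𝕜 E 𝕜).prod L := by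
  refine ⟨(ContinuousLinearEquiv.refl 𝕜 E).skewProd
    (ContinuousLinearEquiv.unitsEquivAut 𝕜 (Units.mk0 _ hL)) (L ∘L .inl 𝕜 E 𝕜), ?_⟩
  have hzero : L (0, 0) = 0 := map_zero L
  ext <;> simp [hzero]

theorem exists_openPartialHomeomorph_eq_fst_prod {𝕜 E : Type*} [RCLike 𝕜]
    [NormedAddCommGroup E] [NormedSpace 𝕜 E] [CompleteSpace E] {n : WithTop ℕ∞}
    {F : E × 𝕜 → 𝕜} {U : Set (E × 𝕜)} {p : E × 𝕜} (hU : U ∈ 𝓝 p) (hn : n ≠ 0)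
    (hF : ∀ q ∈ U, ContDiffAt 𝕜 n F q) (hF' : ∀ q ∈ U, fderiv 𝕜 F q (0, 1) ≠ 0) :
    ∃ e : OpenPartialHomeomorph (E × 𝕜) (E × 𝕜), p ∈ e.source ∧ e.source ⊆ U ∧
      ⇑e = (fun q => (q.1, F q)) ∧ ContDiffOn 𝕜 n e.symm e.target := by
  have hΨ : ∀ q ∈ U, ContDiffAt 𝕜 n (fun q => (q.1, F q)) q := fun q hq =>
    contDiffAt_fst.prodMk (hF q hq)
  have hΨ' : ∀ q ∈ U, ∃ A : (E × 𝕜) ≃L[𝕜] (E × 𝕜),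
      HasFDerivAt (fun q => (q.1, F q)) (A : E × 𝕜 →L[𝕜] E × 𝕜) q := by
    intro q hq
    obtain ⟨A, hA⟩ := exists_continuousLinearEquiv_eq_fst_prod _ (hF' q hq)
    exact ⟨A, hA ▸ hasFDerivAt_fst.prodMk ((hF q hq).differentiableAt hn).hasFDerivAt⟩
  have hp : p ∈ U := mem_of_mem_nhds hU
  obtain ⟨A, hA⟩ := hΨ' p hp
  let e := ((hΨ p hp).toOpenPartialHomeomorph _ hA hn).restr U
  have he : e.source ⊆ U := fun q hq => interior_subset hq.2
  refine ⟨e, ⟨(hΨ p hp).mem_toOpenPartialHomeomorph_source hA hn,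
    mem_interior_iff_mem_nhds.2 hU⟩, he, rfl, fun q hq => ?_⟩
  have hqU : e.symm q ∈ U := he (e.map_target hq)
  obtain ⟨B, hB⟩ := hΨ' _ hqU
  exact (e.contDiffAt_symm hq hB (hΨ _ hqU)).contDiffWithinAt

theorem exists_isSolutionFamilyAt {F : ℝ × ℝ → ℝ} {p : ℝ × ℝ} {U : Set (ℝ × ℝ)}
    {m n : WithTop ℕ∞} (hU : U ∈ 𝓝 p) (hmn : m + 1 ≤ n) (hF : ∀ q ∈ U, ContDiffAt ℝ n F q)
    (hF' : ∀ q ∈ U, pderivU F q.1 q.2 ≠ 0) :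
    ∃ (e : OpenPartialHomeomorph (ℝ × ℝ) (ℝ × ℝ)) (φ : ℝ × ℝ → ℝ), p ∈ e.source ∧
      e.source ⊆ U ∧ ⇑e = (fun q => (q.1, F q)) ∧ ContDiffOn ℝ m φ e.target ∧
      ∀ q ∈ e.source, IsSolutionFamilyAt φ F q := by
  have hn : n ≠ 0 := (one_pos.trans_le (le_add_self.trans hmn)).ne'
  have hdiff : ∀ q ∈ U, DifferentiableAt ℝ F q := fun q hq => (hF q hq).differentiableAt hn
  obtain ⟨e, hp, heU, he, hsymm⟩ := exists_openPartialHomeomorph_eq_fst_prod hU hn hF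
    fun q hq => pderivU_eq_fderiv (hdiff q hq) ▸ hF' q hq
  refine ⟨e, uncurry (pderivX F) ∘ e.symm, hp, heU, he, fun q hq => ?_, fun q hq => ?_⟩
  · exact (contDiffAt_uncurry_pderivX (hF _ (heU (e.map_target hq))) hmn).comp_contDiffWithinAt q
      ((hsymm q hq).of_le (le_self_add.trans hmn))
  · filter_upwards [e.open_source.mem_nhds hq] with r hr
    have hinv : e.symm (r.1, F r) = r := by simpa only [he] using e.left_inv hr
    rw [comp_apply, hinv]
    exact hasDerivAt_pderivX (hdiff r (heU hr))

theorem exists_ode_curvature_eq_of_jacobi_equation {F : ℝ × ℝ → ℝ} {κ : ℝ → ℝ} {J : Set ℝ}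
    {x₀ s₀ : ℝ}
    (hF : ContDiffAt ℝ 3 F (x₀, s₀)) (hJ : J ∈ 𝓝 s₀) (hnz : pderivU F x₀ s₀ ≠ 0)
    (hjacobi : ∀ᶠ q in 𝓝 (x₀, s₀),
      deriv (deriv fun t => pderivU F t q.2) q.1 + κ q.1 * pderivU F q.1 q.2 = 0) :
    ∃ (D : Set (ℝ × ℝ)) (φ : ℝ × ℝ → ℝ) (I₀ J₀ : Set ℝ),
      IsOpen D ∧ (x₀, F (x₀, s₀)) ∈ D ∧
      IsOpen I₀ ∧ x₀ ∈ I₀ ∧ IsOpen J₀ ∧ s₀ ∈ J₀ ∧ J₀ ⊆ J ∧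
      ContDiffOn ℝ 2 φ D ∧
      (∀ s ∈ J₀, ∀ x ∈ I₀,
        (x, F (x, s)) ∈ D ∧ HasDerivAt (fun t => F (t, s)) (φ (x, F (x, s))) x) ∧
      (∀ x u : ℝ, (x, u) ∈ D → curvature φ x u = κ x) := by
  have hF' : ∀ᶠ q in 𝓝 (x₀, s₀), pderivU F q.1 q.2 ≠ 0 :=
    (contDiffAt_uncurry_pderivU hF two_add_one_eq_three.le).continuousAt.eventually_ne hnz
  have hU := (hF.eventually (by simp)).and (hF'.and
    (hjacobi.and (continuousAt_snd.eventually_mem hJ)))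
  obtain ⟨e, φ, hp, heU, he, hφ, hsol⟩ := exists_isSolutionFamilyAt hU
    two_add_one_eq_three.le (fun q hq => hq.1) (fun q hq => hq.2.1)
  have hmaps : ∀ q ∈ e.source, (q.1, F q) ∈ e.target := fun q hq => by
    simpa only [he] using e.map_source hq
  obtain ⟨I₀, J₀, hI₀, hJ₀, hx₀, hs₀, hsub⟩ := isOpen_prod_iff.1 e.open_source x₀ s₀ hp
  refine ⟨e.target, φ, I₀, J₀, e.open_target, hmaps _ hp, hI₀, hx₀, hJ₀, hs₀,
    fun s hs => (heU (hsub (Set.mk_mem_prod hx₀ hs))).2.2.2, hφ,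
    fun s hs x hx => ⟨hmaps (x, s) (hsub ⟨hx, hs⟩), (hsol (x, s) (hsub ⟨hx, hs⟩)).self_of_nhds⟩,
    fun x u hxu => ?_⟩
  obtain ⟨⟨t, s⟩, hq, hqe⟩ : ∃ q ∈ e.source, e q = (x, u) := e.surjOn hxu
  obtain ⟨rfl, rfl⟩ : t = x ∧ F (t, s) = u := by simpa only [he, Prod.mk.injEq] using hqe
  obtain ⟨hFq, hvq, hjq, -⟩ := heU hq
  have hcurv : deriv (deriv fun r => pderivU F r s) t = -curvature φ t (F (t, s)) * pderivU F t s :=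
    (hsol _ hq).jacobi_equation (hφ.contDiffAt (e.open_target.mem_nhds hxu))
      (hFq.of_le (by norm_num))
  refine mul_right_cancel₀ hvq ?_
  linear_combination hcurv - hjq

end Existence

section AffineFamily

/-- The family `f(x; s) = up(x) + c₁(s) y₁(x) + c₂(s) y₂(x)`, as a function of `(x, s)`. -/
def affineFamily (y₁ y₂ up c₁ c₂ : ℝ → ℝ) (q : ℝ × ℝ) : ℝ :=
  up q.1 + c₁ q.2 * y₁ q.1 + c₂ q.2 * y₂ q.1

variable {y₁ y₂ up c₁ c₂ κ : ℝ → ℝ} {x s : ℝ}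

theorem contDiffAt_affineFamily {n : WithTop ℕ∞} (hy₁ : ContDiffAt ℝ n y₁ x)
    (hy₂ : ContDiffAt ℝ n y₂ x) (hup : ContDiffAt ℝ n up x) (hc₁ : ContDiffAt ℝ n c₁ s)
    (hc₂ : ContDiffAt ℝ n c₂ s) : ContDiffAt ℝ n (affineFamily y₁ y₂ up c₁ c₂) (x, s) :=
  (hup.fst'.add (hc₁.snd'.mul hy₁.fst')).add (hc₂.snd'.mul hy₂.fst')

theorem pderivU_affineFamily (hc₁ : DifferentiableAt ℝ c₁ s) (hc₂ : DifferentiableAt ℝ c₂ s)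
    (x : ℝ) : pderivU (affineFamily y₁ y₂ up c₁ c₂) x s = deriv c₁ s * y₁ x + deriv c₂ s * y₂ x :=
  (((hc₁.hasDerivAt.mul_const (y₁ x)).const_add (up x)).add
    (hc₂.hasDerivAt.mul_const (y₂ x))).deriv

theorem deriv_deriv_linear_combination (hy₁ : ContDiffAt ℝ 2 y₁ x) (hy₂ : ContDiffAt ℝ 2 y₂ x)
    (a b : ℝ) :
    deriv (deriv fun t => a * y₁ t + b * y₂ t) x =
      a * deriv (deriv y₁) x + b * deriv (deriv y₂) x := by
  have hadd := iteratedDeriv_fun_add (contDiffAt_const (c := a) |>.mul hy₁)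
    (contDiffAt_const (c := b) |>.mul hy₂)
  simpa only [iteratedDeriv_const_mul_field, iteratedDeriv_succ, iteratedDeriv_zero] using hadd

theorem deriv_deriv_pderivU_affineFamily (hc₁ : DifferentiableAt ℝ c₁ s)
    (hc₂ : DifferentiableAt ℝ c₂ s) (hy₁s : ContDiffAt ℝ 2 y₁ x) (hy₂s : ContDiffAt ℝ 2 y₂ x)
    (hy₁ : deriv (deriv y₁) x + κ x * y₁ x = 0) (hy₂ : deriv (deriv y₂) x + κ x * y₂ x = 0) :
    deriv (deriv fun t => pderivU (affineFamily y₁ y₂ up c₁ c₂) t s) x +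
      κ x * pderivU (affineFamily y₁ y₂ up c₁ c₂) x s = 0 := by
  simp only [pderivU_affineFamily hc₁ hc₂, deriv_deriv_linear_combination hy₁s hy₂s]
  linear_combination deriv c₁ s * hy₁ + deriv c₂ s * hy₂

theorem stmt_8_general {J : Set ℝ} {x₀ s₀ : ℝ}
    (hy₁s : ContDiffAt ℝ 3 y₁ x₀) (hy₂s : ContDiffAt ℝ 3 y₂ x₀) (hups : ContDiffAt ℝ 3 up x₀)
    (hy₁ : ∀ᶠ x in 𝓝 x₀, deriv (deriv y₁) x + κ x * y₁ x = 0)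
    (hy₂ : ∀ᶠ x in 𝓝 x₀, deriv (deriv y₂) x + κ x * y₂ x = 0)
    (hJ : J ∈ 𝓝 s₀) (hc₁ : ContDiffAt ℝ 3 c₁ s₀) (hc₂ : ContDiffAt ℝ 3 c₂ s₀)
    (hnz : deriv c₁ s₀ * y₁ x₀ + deriv c₂ s₀ * y₂ x₀ ≠ 0) :
    ∃ (D : Set (ℝ × ℝ)) (φ : ℝ × ℝ → ℝ) (I₀ J₀ : Set ℝ),
      IsOpen D ∧ (x₀, up x₀ + c₁ s₀ * y₁ x₀ + c₂ s₀ * y₂ x₀) ∈ D ∧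
      IsOpen I₀ ∧ x₀ ∈ I₀ ∧ IsOpen J₀ ∧ s₀ ∈ J₀ ∧ J₀ ⊆ J ∧
      ContDiffOn ℝ 2 φ D ∧
      (∀ s ∈ J₀, ∀ x ∈ I₀,
        (x, up x + c₁ s * y₁ x + c₂ s * y₂ x) ∈ D ∧
        HasDerivAt (fun t => up t + c₁ s * y₁ t + c₂ s * y₂ t)
          (φ (x, up x + c₁ s * y₁ x + c₂ s * y₂ x)) x) ∧
      (∀ x u : ℝ, (x, u) ∈ D → curvature φ x u = κ x) := by
  have hc : ∀ᶠ s in 𝓝 s₀, DifferentiableAt ℝ c₁ s ∧ DifferentiableAt ℝ c₂ s :=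
    ((hc₁.eventually (by simp)).and (hc₂.eventually (by simp))).mono fun s hs =>
      ⟨hs.1.differentiableAt three_ne_zero, hs.2.differentiableAt three_ne_zero⟩
  have hy : ∀ᶠ x in 𝓝 x₀, ContDiffAt ℝ 2 y₁ x ∧ ContDiffAt ℝ 2 y₂ x :=
    ((hy₁s.of_le (by norm_num)).eventually (by simp)).and
      ((hy₂s.of_le (by norm_num)).eventually (by simp))
  obtain ⟨hc₁', hc₂'⟩ := hc.self_of_nhds
  refine exists_ode_curvature_eq_of_jacobi_equation
    (contDiffAt_affineFamily hy₁s hy₂s hups hc₁ hc₂) hJ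
    (by rwa [pderivU_affineFamily hc₁' hc₂']) ?_
  filter_upwards [((hy.and hy₁).and hy₂).prod_nhds hc] with q ⟨⟨⟨hyq, hy₁q⟩, hy₂q⟩, hcq⟩
  exact deriv_deriv_pderivU_affineFamily hcq.1 hcq.2 hyq.1 hyq.2 hy₁q hy₂q

end AffineFamily

/-- Given smooth `κ, c`, linearly independent smooth solutions `y₁, y₂` of
`y'' + κ·y = 0`, a smooth solution `u_p` of `u'' + κ·u = c`, and a smooth immersed curve
`(c₁, c₂)` on `J`, set `f(x;s) := u_p(x) + c₁(s)·y₁(x) + c₂(s)·y₂(x)`. If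
`c₁'(s₀)·y₁(x₀) + c₂'(s₀)·y₂(x₀) ≠ 0`, then near `(x₀, s₀)` there is a C² function `φ` on
an open set `D ∋ (x₀, f(x₀;s₀))` such that each `f(·;s)` solves `u' = φ(x,u)` and the
curvature of `φ` satisfies `𝒦(x,u) = κ(x)` on `D`. -/
theorem stmt_8 (κ c : ℝ → ℝ) (hκ : ContDiff ℝ (⊤ : ℕ∞) κ) (hc : ContDiff ℝ (⊤ : ℕ∞) c)
    (y₁ y₂ up : ℝ → ℝ)
    (hy₁s : ContDiff ℝ (⊤ : ℕ∞) y₁) (hy₂s : ContDiff ℝ (⊤ : ℕ∞) y₂) (hups : ContDiff ℝ (⊤ : ℕ∞) up)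
    (hy₁ : ∀ x : ℝ, deriv (deriv y₁) x + κ x * y₁ x = 0)
    (hy₂ : ∀ x : ℝ, deriv (deriv y₂) x + κ x * y₂ x = 0)
    (hli : LinearIndependent ℝ ![y₁, y₂])
    (hup : ∀ x : ℝ, deriv (deriv up) x + κ x * up x = c x)
    (J : Set ℝ) (hJ : IsOpen J)
    (c₁ c₂ : ℝ → ℝ) (hc₁ : ContDiffOn ℝ (⊤ : ℕ∞) c₁ J) (hc₂ : ContDiffOn ℝ (⊤ : ℕ∞) c₂ J)
    (himm : ∀ s ∈ J, (deriv c₁ s, deriv c₂ s) ≠ (0, 0))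
    (x₀ s₀ : ℝ) (hs₀ : s₀ ∈ J)
    (hnz : deriv c₁ s₀ * y₁ x₀ + deriv c₂ s₀ * y₂ x₀ ≠ 0) :
    ∃ (D : Set (ℝ × ℝ)) (φ : ℝ × ℝ → ℝ) (I₀ J₀ : Set ℝ),
      IsOpen D ∧ (x₀, up x₀ + c₁ s₀ * y₁ x₀ + c₂ s₀ * y₂ x₀) ∈ D ∧
      IsOpen I₀ ∧ x₀ ∈ I₀ ∧ IsOpen J₀ ∧ s₀ ∈ J₀ ∧ J₀ ⊆ J ∧
      ContDiffOn ℝ 2 φ D ∧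
      (∀ s ∈ J₀, ∀ x ∈ I₀,
        (x, up x + c₁ s * y₁ x + c₂ s * y₂ x) ∈ D ∧
        HasDerivAt (fun t => up t + c₁ s * y₁ t + c₂ s * y₂ t)
          (φ (x, up x + c₁ s * y₁ x + c₂ s * y₂ x)) x) ∧
      (∀ x u : ℝ, (x, u) ∈ D → curvature φ x u = κ x) := by
  have h3 : (3 : WithTop ℕ∞) ≤ (⊤ : ℕ∞) := WithTop.coe_le_coe.2 (le_top : (3 : ℕ∞) ≤ ⊤)
  have hsmooth {f : ℝ → ℝ} (hf : ContDiff ℝ (⊤ : ℕ∞) f) : ContDiffAt ℝ 3 f x₀ :=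
    hf.contDiffAt.of_le h3
  have hsmooth_J {f : ℝ → ℝ} (hf : ContDiffOn ℝ (⊤ : ℕ∞) f J) : ContDiffAt ℝ 3 f s₀ :=
    (hf.contDiffAt (hJ.mem_nhds hs₀)).of_le h3
  exact stmt_8_general (hsmooth hy₁s) (hsmooth hy₂s) (hsmooth hups) (.of_forall hy₁)
    (.of_forall hy₂) (hJ.mem_nhds hs₀) (hsmooth_J hc₁) (hsmooth_J hc₂) hnz
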